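/- Let n ≥ 3 and let H = K_1 ∇ P_{n−1} be the fan graph on vertices v_0, v_1, …, v_{n−1}, i.e., v_0 is adjacent to every other vertex and v_i is adjacent to v_{i+1} for 1 ≤ i ≤ n−2, with no other edges. Then the Q-index of H satisfies q(H) > n. -/

import Mathlib

open Matrix

/-- The signless Laplacian `Q(G) = D(G) + A(G)` of a finite simple graph `G`. -/
noncomputable def signlessLaplacian {V : Type*} [Fintype V] (G : SimpleGraph V) :
    Matrix V V ℝ :=
  letI := Classical.decEq V
  letI : DecidableRel G.Adj := Classical.decRel _
  Matrix.diagonal (fun v => (G.degree v : ℝ)) + G.adjMatrix ℝ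

/-- The `Q`-index of `G`: the largest eigenvalue of the signless Laplacian `Q(G)`. -/
noncomputable def qIndex {V : Type*} [Fintype V] (G : SimpleGraph V) : ℝ :=
  letI := Classical.decEq V
  sSup (spectrum ℝ (signlessLaplacian G))

/-!
For a vertex `v` of degree `d`, the column `x = Q e_v` of the signless Laplacian is `d` at `v`,
`1` on the neighbours of `v` and `0` elsewhere: for `d > 0` it is the Perron vector of the star at
`v`, whose `Q`-index is `d + 1`. Since `(Q x)_i` is the sum of `x_i + x_j` over the neighbours `j`
of `i`, keeping only the edges of that star gives `Q x ≥ (d + 1) x`, and the third edge of a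
triangle through `v` makes this strict at its two ends. Pairing with `x ≥ 0` shows that the
Rayleigh quotient of `Q` at `x`, hence the `Q`-index, exceeds `d + 1`. The hub of the fan has
`d + 1 = n` and lies on a triangle.
-/

section Hermitian

variable {V : Type*} [Fintype V] [DecidableEq V]

section RCLike

open scoped ComplexOrder MatrixOrder

variable {𝕜 : Type*} [RCLike 𝕜] {A : Matrix V V 𝕜}

theorem le_algebraMap_sSup_spectrum (hA : A.IsHermitian) :
    A ≤ algebraMap ℝ (Matrix V V 𝕜) (sSup (spectrum ℝ A)) :=
  le_algebraMap_of_spectrum_le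
    (fun _ hμ => le_csSup Matrix.finite_real_spectrum.bddAbove hμ) hA.isSelfAdjoint

theorem star_dotProduct_mulVec_le_sSup_spectrum_smul (hA : A.IsHermitian) (x : V → 𝕜) :
    star x ⬝ᵥ A *ᵥ x ≤ sSup (spectrum ℝ A) • (star x ⬝ᵥ x) := by
  have hnonneg := (Matrix.le_iff.1 (le_algebraMap_sSup_spectrum hA)).dotProduct_mulVec_nonneg x
  rwa [sub_mulVec, Algebra.algebraMap_eq_smul_one, smul_mulVec, one_mulVec, dotProduct_sub,
    dotProduct_smul, sub_nonneg] at hnonneg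

end RCLike

theorem lt_sSup_spectrum_of_smul_le_mulVec {A : Matrix V V ℝ} (hA : A.IsHermitian) {c : ℝ}
    {x : V → ℝ} (hx : 0 ≤ x) (hle : c • x ≤ A *ᵥ x) {i : V} (hxi : 0 < x i)
    (hlt : c * x i < (A *ᵥ x) i) : c < sSup (spectrum ℝ A) := by
  have hsum : x ⬝ᵥ c • x < x ⬝ᵥ A *ᵥ x :=
    Finset.sum_lt_sum (fun j _ => mul_le_mul_of_nonneg_left (hle j) (hx j))
      ⟨i, Finset.mem_univ i, mul_lt_mul_of_pos_left hlt hxi⟩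
  refine lt_of_mul_lt_mul_right ?_ (dotProduct_nonneg_of_nonneg hx hx)
  calc c * (x ⬝ᵥ x) = x ⬝ᵥ c • x := (dotProduct_smul c x x).symm
    _ < x ⬝ᵥ A *ᵥ x := hsum
    _ ≤ sSup (spectrum ℝ A) * (x ⬝ᵥ x) := star_dotProduct_mulVec_le_sSup_spectrum_smul hA x

end Hermitian

section SignlessLaplacian

variable {V : Type*} [Fintype V] (G : SimpleGraph V)

theorem signlessLaplacian_eq_degMatrix_add_adjMatrix [DecidableEq V] [DecidableRel G.Adj] :
    signlessLaplacian G = G.degMatrix ℝ + G.adjMatrix ℝ := by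
  unfold signlessLaplacian SimpleGraph.degMatrix
  congr!

theorem isHermitian_signlessLaplacian : (signlessLaplacian G).IsHermitian := by
  classical
  rw [signlessLaplacian_eq_degMatrix_add_adjMatrix]
  exact (G.isHermitian_degMatrix ℝ).add (G.isHermitian_adjMatrix ℝ)

theorem signlessLaplacian_apply_self (v : V) [Fintype (G.neighborSet v)] :
    signlessLaplacian G v v = G.degree v := by
  classical
  simp only [signlessLaplacian_eq_degMatrix_add_adjMatrix, SimpleGraph.degMatrix, Matrix.add_apply,
    Matrix.diagonal_apply_eq, SimpleGraph.adjMatrix_apply, SimpleGraph.irrefl, if_false, add_zero]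
  congr!

variable {G} in
theorem signlessLaplacian_apply_of_adj {u v : V} (huv : G.Adj u v) :
    signlessLaplacian G u v = 1 := by
  classical
  simp [signlessLaplacian_eq_degMatrix_add_adjMatrix, SimpleGraph.degMatrix, huv, huv.ne]

theorem signlessLaplacian_apply_of_not_adj {u v : V} (hne : u ≠ v) (huv : ¬ G.Adj u v) :
    signlessLaplacian G u v = 0 := by
  classical
  simp [signlessLaplacian_eq_degMatrix_add_adjMatrix, SimpleGraph.degMatrix, huv, hne]

theorem signlessLaplacian_apply_nonneg (u v : V) : 0 ≤ signlessLaplacian G u v := by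
  classical
  rw [signlessLaplacian_eq_degMatrix_add_adjMatrix, SimpleGraph.degMatrix, Matrix.add_apply,
    Matrix.diagonal_apply, SimpleGraph.adjMatrix_apply]
  positivity

theorem signlessLaplacian_mulVec_apply (x : V → ℝ) (v : V) [Fintype (G.neighborSet v)] :
    (signlessLaplacian G *ᵥ x) v = ∑ u ∈ G.neighborFinset v, (x v + x u) := by
  classical
  rw [signlessLaplacian_eq_degMatrix_add_adjMatrix, add_mulVec, Pi.add_apply,
    SimpleGraph.degMatrix_mulVec_apply, SimpleGraph.adjMatrix_mulVec_apply, Finset.sum_add_distrib,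
    Finset.sum_const, SimpleGraph.card_neighborFinset_eq_degree, nsmul_eq_mul]
  congr!

variable {G}

theorem add_le_signlessLaplacian_mulVec_apply {x : V → ℝ} (hx : 0 ≤ x) {v u : V}
    (hvu : G.Adj v u) : x v + x u ≤ (signlessLaplacian G *ᵥ x) v := by
  classical
  rw [signlessLaplacian_mulVec_apply]
  exact Finset.single_le_sum (f := fun u => x v + x u) (fun w _ => add_nonneg (hx v) (hx w))
    ((G.mem_neighborFinset v u).2 hvu)

theorem add_lt_signlessLaplacian_mulVec_apply {x : V → ℝ} (hx : 0 ≤ x) {v u w : V}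
    (hvu : G.Adj v u) (hvw : G.Adj v w) (hwu : w ≠ u) (hxv : 0 < x v) :
    x v + x u < (signlessLaplacian G *ᵥ x) v := by
  classical
  rw [signlessLaplacian_mulVec_apply]
  exact Finset.single_lt_sum (f := fun u => x v + x u) hwu ((G.mem_neighborFinset v u).2 hvu)
    ((G.mem_neighborFinset v w).2 hvw) (add_pos_of_pos_of_nonneg hxv (hx w))
    (fun w _ _ => add_nonneg (hx v) (hx w))

theorem signlessLaplacian_mulVec_col_apply_self (v : V) [Fintype (G.neighborSet v)] :
    (signlessLaplacian G *ᵥ (signlessLaplacian G).col v) v = (G.degree v + 1) * G.degree v := by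
  have hterm : ∀ u ∈ G.neighborFinset v,
      (signlessLaplacian G).col v v + (signlessLaplacian G).col v u = G.degree v + 1 := by
    intro u hu
    have hvu : G.Adj v u := (G.mem_neighborFinset v u).1 hu
    rw [col_apply, col_apply, signlessLaplacian_apply_self,
      signlessLaplacian_apply_of_adj hvu.symm]
  rw [signlessLaplacian_mulVec_apply, Finset.sum_congr rfl hterm, Finset.sum_const,
    SimpleGraph.card_neighborFinset_eq_degree, nsmul_eq_mul, mul_comm]

theorem degree_add_one_smul_col_le_signlessLaplacian_mulVec_col (v : V)
    [Fintype (G.neighborSet v)] :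
    (G.degree v + 1 : ℝ) • (signlessLaplacian G).col v ≤
      signlessLaplacian G *ᵥ (signlessLaplacian G).col v := by
  intro u
  have hcol : 0 ≤ (signlessLaplacian G).col v := fun w => signlessLaplacian_apply_nonneg G w v
  rw [Pi.smul_apply, col_apply, smul_eq_mul]
  obtain rfl | hne := eq_or_ne u v
  · rw [signlessLaplacian_mulVec_col_apply_self, signlessLaplacian_apply_self]
  by_cases huv : G.Adj u v
  · have hle := add_le_signlessLaplacian_mulVec_apply hcol huv
    rw [col_apply, col_apply, signlessLaplacian_apply_of_adj huv,
      signlessLaplacian_apply_self] at hle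
    rwa [signlessLaplacian_apply_of_adj huv, mul_one, add_comm]
  · rw [signlessLaplacian_apply_of_not_adj G hne huv, mul_zero]
    exact dotProduct_nonneg_of_nonneg (signlessLaplacian_apply_nonneg G u) hcol

theorem degree_add_one_lt_qIndex_of_triangle {u v w : V} [Fintype (G.neighborSet v)]
    (huv : G.Adj u v) (hvw : G.Adj v w) (huw : G.Adj u w) :
    (G.degree v + 1 : ℝ) < qIndex G := by
  have hcol : 0 ≤ (signlessLaplacian G).col v := fun w => signlessLaplacian_apply_nonneg G w v
  have hcol_u : (signlessLaplacian G).col v u = 1 := signlessLaplacian_apply_of_adj huv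
  have hcol_v : (signlessLaplacian G).col v v = G.degree v := signlessLaplacian_apply_self G v
  have hlt : (G.degree v + 1) * (signlessLaplacian G).col v u <
      (signlessLaplacian G *ᵥ (signlessLaplacian G).col v) u := by
    calc (G.degree v + 1) * (signlessLaplacian G).col v u
        = (signlessLaplacian G).col v u + (signlessLaplacian G).col v v := by
          rw [hcol_u, hcol_v, mul_one, add_comm]
      _ < _ := add_lt_signlessLaplacian_mulVec_apply hcol huv huw hvw.ne' (hcol_u ▸ one_pos)
  classical
  exact lt_sSup_spectrum_of_smul_le_mulVec (isHermitian_signlessLaplacian G) hcol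
    (degree_add_one_smul_col_le_signlessLaplacian_mulVec_col v) (hcol_u ▸ one_pos) hlt

theorem stmt_17_general {u v w : V} (hv : G.IsUniversal v) (hvu : v ≠ u) (hvw : v ≠ w)
    (huw : G.Adj u w) : (Fintype.card V : ℝ) < qIndex G := by
  classical
  have hdegree : G.degree v + 1 = Fintype.card V := by
    rw [(G.degree_eq_card_sub_one v).2 hv]
    exact Nat.sub_add_cancel (Fintype.card_pos_iff.2 ⟨v⟩)
  rw [← hdegree, Nat.cast_add_one]
  exact degree_add_one_lt_qIndex_of_triangle (hv hvu).symm (hv hvw) huw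

end SignlessLaplacian

/-- the fan graph `K_1 ∇ P_{n-1}` on `n ≥ 3` vertices has `Q`-index
greater than `n`. -/
theorem stmt_17 (n : ℕ) (hn : 3 ≤ n) (H : SimpleGraph (Fin n))
    (hadj : ∀ u w : Fin n, H.Adj u w ↔
      u ≠ w ∧ (u.val = 0 ∨ w.val = 0 ∨ u.val + 1 = w.val ∨ w.val + 1 = u.val)) :
    (n : ℝ) < qIndex H := by
  have hlt := stmt_17_general (G := H) (v := ⟨0, by omega⟩) (u := ⟨1, by omega⟩)
    (w := ⟨2, by omega⟩) (fun w hw => (hadj _ w).2 ⟨hw, Or.inl rfl⟩) (by simp) (by simp)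
    ((hadj _ _).2 (by simp))
  rwa [Fintype.card_fin] at hlt
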